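/- arXiv:1002.3938 — 2 statements merged into one kernel-verified Lean document; each statement's English description precedes it below -/
import Mathlib

section
/- Let n ≥ 1 and let x, y ∈ [0,∞)^n with ∑_{i=1}^n x_i = ∑_{i=1}^n y_i. Then the following are equivalent: (a) x majorizes y; (b) G_{k,r}(x) ≤ G_{k,r}(y) for all integers k, r ≥ 1; (c) M_{k,r}(x) ≥ M_{k,r}(y) for all integers k, r ≥ 1. -/
open Finset MeasureTheory

/-- `G n k r x`: the sum over all n-tuples p of nonnegative integers with `∑ i, p i = k`
and at least `r` nonzero entries, of `∏ i, x i ^ p i / (p i)!`. -/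
noncomputable def G (n k r : ℕ) (x : Fin n → ℝ) : ℝ :=
  ∑ κ ∈ Finset.univ.filter (fun κ : Fin n → Fin (k + 1) =>
      (∑ i, (κ i : ℕ)) = k ∧ r ≤ (Finset.univ.filter fun i => (κ i : ℕ) ≠ 0).card),
    ∏ i, x i ^ (κ i : ℕ) / (Nat.factorial (κ i : ℕ))

/-- `M n k r x = ∑_{1 ≤ i₁ < ⋯ < i_r ≤ n} (x_{i₁} + ⋯ + x_{i_r})^k`. -/
noncomputable def M (n k r : ℕ) (x : Fin n → ℝ) : ℝ :=
  ∑ A ∈ Finset.powersetCard r (Finset.univ : Finset (Fin n)), (∑ i ∈ A, x i) ^ k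

/-- The sum of the `m` largest entries of `x`, i.e. the largest sum of `m` entries. -/
noncomputable def sMax (n m : ℕ) (x : Fin n → ℝ) : ℝ :=
  sSup {s : ℝ | ∃ A : Finset (Fin n), A.card = m ∧ s = ∑ i ∈ A, x i}

/-- `x` majorizes `y`: equal total sums, and for each `1 ≤ m ≤ n-1` the sum of the
`m` largest entries of `x` is at least that of `y`. -/
def Majorizes (n : ℕ) (x y : Fin n → ℝ) : Prop :=
  (∑ i, x i = ∑ i, y i) ∧ ∀ m : ℕ, 1 ≤ m → m ≤ n - 1 → sMax n m y ≤ sMax n m x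


/-- transfer -/
def tr {n : ℕ} (x : Fin n → ℝ) (i j : Fin n) (t : ℝ) : Fin n → ℝ :=
  fun k => if k = i then x i - t else if k = j then x j + t else x k

lemma tr_eq {n : ℕ} (x : Fin n → ℝ) (i j : Fin n) (hij : i ≠ j) (t : ℝ) (k : Fin n) :
    tr x i j t k = x k - (if k = i then t else 0) + (if k = j then t else 0) := by
  unfold tr
  by_cases h1 : k = i
  · subst h1; simp [hij]
  · by_cases h2 : k = j
    · subst h2; simp [h1]
    · simp [h1, h2]

lemma tr_prefix {n : ℕ} (x : Fin n → ℝ) (i j : Fin n) (hij : i ≠ j) (t : ℝ) (s : Finset (Fin n)) :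
    ∑ k ∈ s, tr x i j t k = ∑ k ∈ s, x k - (if i ∈ s then t else 0) + (if j ∈ s then t else 0) := by
  simp only [tr_eq x i j hij t, Finset.sum_add_distrib, Finset.sum_sub_distrib, Finset.sum_ite_eq']

lemma schur_chain {n : ℕ} (F : (Fin n → ℝ) → ℝ)
    (hF : ∀ (x : Fin n → ℝ) (i j : Fin n) (t : ℝ), (∀ k, 0 ≤ x k) → i ≠ j → 0 ≤ t →
      x j + t ≤ x i - t → F x ≤ F (tr x i j t))
    (y : Fin n → ℝ) (hy : ∀ k, 0 ≤ y k) (hya : Antitone y) :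
    ∀ (N : ℕ) (x : Fin n → ℝ), (Finset.univ.filter (fun k => x k ≠ y k)).card ≤ N →
      (∀ k, 0 ≤ x k) → (∑ k, x k = ∑ k, y k) →
      (∀ j : Fin n, ∑ k ∈ Finset.Iio j, y k ≤ ∑ k ∈ Finset.Iio j, x k) → F x ≤ F y := by
  intro N
  induction N with
  | zero =>
    intro x hN _ _ _
    have : x = y := by
      ext k
      by_contra h
      have : k ∈ Finset.univ.filter (fun k => x k ≠ y k) := by simp [h]
      simp only [Nat.le_zero, Finset.card_eq_zero] at hN
      rw [hN] at this
      simp at this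
    rw [this]
  | succ N ih =>
    intro x hN hx hs hp
    by_cases hxy : x = y
    · rw [hxy]
    have hJ : (Finset.univ.filter (fun k => x k < y k)).Nonempty := by
      by_contra h
      rw [Finset.not_nonempty_iff_eq_empty, Finset.filter_eq_empty_iff] at h
      have h' : ∀ k ∈ Finset.univ, y k ≤ x k := fun k hk => not_lt.1 (h hk)
      have := (Finset.sum_eq_sum_iff_of_le h').1 hs.symm
      exact hxy (funext fun k => (this k (Finset.mem_univ k)).symm)
    obtain ⟨j, hjm, hjmin⟩ := Finset.exists_min_image _ id hJ
    simp only [Finset.mem_filter, Finset.mem_univ, true_and, id] at hjm hjmin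
    have hlt : ∀ k, k < j → y k ≤ x k := fun k hk => by
      by_contra h
      exact absurd (hjmin k (not_le.1 h)) (not_le.2 hk)
    have hI : (Finset.univ.filter (fun k => k < j ∧ y k < x k)).Nonempty := by
      by_contra h
      rw [Finset.not_nonempty_iff_eq_empty, Finset.filter_eq_empty_iff] at h
      have h1 : ∑ k ∈ Finset.Iic j, x k < ∑ k ∈ Finset.Iic j, y k := by
        apply Finset.sum_lt_sum
        · intro k hk
          rcases (Finset.mem_Iic.1 hk).lt_or_eq with h2 | h2
          · by_contra h3
            exact h (Finset.mem_univ k) ⟨h2, not_le.1 h3⟩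
          · rw [h2]; exact hjm.le
        · exact ⟨j, by simp, hjm⟩
      by_cases hjn : (j : ℕ) + 1 < n
      · have h2 := hp ⟨j + 1, hjn⟩
        have h3 : Finset.Iio (⟨j + 1, hjn⟩ : Fin n) = Finset.Iic j := by
          ext k; simp only [Finset.mem_Iio, Finset.mem_Iic, Fin.lt_def, Fin.le_def]; omega
        rw [h3] at h2
        linarith
      · have h3 : Finset.Iic j = Finset.univ := by
          ext k; simp only [Finset.mem_Iic, Finset.mem_univ, Fin.le_def, iff_true]; omega
        rw [h3] at h1
        linarith
    obtain ⟨i, him, himax⟩ := Finset.exists_max_image _ id hI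
    simp only [Finset.mem_filter, Finset.mem_univ, true_and, id] at him himax
    obtain ⟨hij, hi⟩ := him
    have hmid : ∀ k, i < k → k < j → x k = y k := by
      intro k h1 h2
      refine le_antisymm ?_ (hlt k h2)
      by_contra h3
      exact absurd (himax k ⟨h2, not_le.1 h3⟩) (not_le.2 h1)
    have hne : i ≠ j := hij.ne
    set t := min (x i - y i) (y j - x j) with ht
    have ht1 : t ≤ x i - y i := min_le_left _ _
    have ht2 : t ≤ y j - x j := min_le_right _ _
    have ht0 : 0 ≤ t := le_min (by linarith) (by linarith)
    have hyij := hya hij.le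
    refine (hF x i j t hx hne ht0 (by linarith)).trans ?_
    apply ih
    · have hss : Finset.univ.filter (fun k => tr x i j t k ≠ y k) ⊂
          Finset.univ.filter (fun k => x k ≠ y k) := by
        rw [Finset.ssubset_iff_of_subset]
        · rcases min_choice (x i - y i) (y j - x j) with h | h
          · refine ⟨i, by simp [hi.ne'], ?_⟩
            have : t = x i - y i := h
            simp [tr, this]
          · refine ⟨j, by simp [hjm.ne], ?_⟩
            have : t = y j - x j := h
            simp [tr, this, hne.symm]
        · intro k
          simp only [Finset.mem_filter, Finset.mem_univ, true_and]
          by_cases h1 : k = i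
          · subst h1; intro _; exact hi.ne'
          · by_cases h2 : k = j
            · subst h2; intro _; exact hjm.ne
            · simp [tr, h1, h2]
      have := Finset.card_lt_card hss
      omega
    · intro k
      unfold tr
      split_ifs
      · have := hy i; linarith
      · have := hx j; linarith
      · exact hx k
    · rw [tr_prefix x i j hne]; simp [hs]
    · intro m
      rw [tr_prefix x i j hne]
      have hm := hp m
      simp only [Finset.mem_Iio]
      by_cases h1 : i < m
      · by_cases h2 : j < m
        · simp [h1, h2]; exact hm
        · simp only [h1, h2, if_true, if_false]
          have h3 : ∑ k ∈ Finset.Iio m, (if k = i then t else 0) ≤ ∑ k ∈ Finset.Iio m, (x k - y k) := by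
            apply Finset.sum_le_sum
            intro k hk
            have hk' : k < j := lt_of_lt_of_le (Finset.mem_Iio.1 hk) (not_lt.1 h2)
            split_ifs with h4
            · subst h4; exact ht1
            · have := hlt k hk'; linarith
          rw [Finset.sum_ite_eq', Finset.sum_sub_distrib] at h3
          simp only [Finset.mem_Iio, h1, if_true] at h3
          linarith
      · have h2 : ¬ j < m := fun h => h1 (hij.trans h)
        simp [h1, h2]; exact hm

lemma sMax_set_finite (n m : ℕ) (x : Fin n → ℝ) :
    {s : ℝ | ∃ A : Finset (Fin n), A.card = m ∧ s = ∑ i ∈ A, x i}.Finite := by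
  refine (Set.finite_range (fun A : Finset (Fin n) => ∑ i ∈ A, x i)).subset ?_
  rintro s ⟨A, _, rfl⟩
  exact ⟨A, rfl⟩

lemma le_sMax {n : ℕ} (x : Fin n → ℝ) (A : Finset (Fin n)) :
    ∑ i ∈ A, x i ≤ sMax n A.card x :=
  le_csSup (sMax_set_finite n _ x).bddAbove ⟨A, rfl, rfl⟩

lemma exists_sMax {n m : ℕ} (hm : m ≤ n) (x : Fin n → ℝ) :
    ∃ A : Finset (Fin n), A.card = m ∧ sMax n m x = ∑ i ∈ A, x i := by
  have hne : {s : ℝ | ∃ A : Finset (Fin n), A.card = m ∧ s = ∑ i ∈ A, x i}.Nonempty := by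
    obtain ⟨A, -, hA⟩ := Finset.exists_subset_card_eq (s := (Finset.univ : Finset (Fin n))) (n := m) (by simpa using hm)
    exact ⟨_, A, hA, rfl⟩
  exact hne.csSup_mem (sMax_set_finite n m x)

lemma prefix_max {n : ℕ} (x : Fin n → ℝ) (hx : Antitone x) (j : Fin n) (A : Finset (Fin n))
    (hA : A.card = (j : ℕ)) : ∑ k ∈ A, x k ≤ ∑ k ∈ Finset.Iio j, x k := by
  have h1 : ∑ k ∈ A, (x k - x j) ≤ ∑ k ∈ Finset.Iio j, (x k - x j) := by
    calc _ ≤ ∑ k ∈ A, max (x k - x j) 0 := Finset.sum_le_sum fun k _ => le_max_left _ _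
      _ ≤ ∑ k, max (x k - x j) 0 :=
        Finset.sum_le_sum_of_subset_of_nonneg (Finset.subset_univ _) fun k _ _ => le_max_right _ _
      _ = ∑ k ∈ Finset.Iio j, max (x k - x j) 0 := by
        symm
        apply Finset.sum_subset (Finset.subset_univ _)
        intro k _ hk
        have := hx (not_lt.1 fun h => hk (Finset.mem_Iio.2 h))
        simp [this]
      _ = _ := by
        apply Finset.sum_congr rfl
        intro k hk
        have := hx (Finset.mem_Iio.1 hk).le
        simp [this]
  simp only [Finset.sum_sub_distrib, Finset.sum_const, Fin.card_Iio, hA] at h1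
  linarith

lemma exists_sort {n : ℕ} (x : Fin n → ℝ) : ∃ σ : Equiv.Perm (Fin n), Antitone (x ∘ σ) := by
  refine ⟨Tuple.sort (fun i => - x i), ?_⟩
  have := Tuple.monotone_sort (fun i => - x i)
  intro a b hab
  have := this hab
  simpa using this

lemma sMax_perm {n m : ℕ} (x : Fin n → ℝ) (σ : Equiv.Perm (Fin n)) :
    sMax n m (x ∘ σ) = sMax n m x := by
  unfold sMax
  congr 1
  ext s
  constructor
  · rintro ⟨A, hA, rfl⟩
    exact ⟨A.map σ.toEmbedding, by simp [hA], by simp⟩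
  · rintro ⟨A, hA, rfl⟩
    exact ⟨A.map σ.symm.toEmbedding, by simp [hA], by simp⟩

lemma schur_main {n : ℕ} (F : (Fin n → ℝ) → ℝ)
    (hsym : ∀ (x : Fin n → ℝ) (σ : Equiv.Perm (Fin n)), F (x ∘ σ) = F x)
    (hF : ∀ (x : Fin n → ℝ) (i j : Fin n) (t : ℝ), (∀ k, 0 ≤ x k) → i ≠ j → 0 ≤ t →
      x j + t ≤ x i - t → F x ≤ F (tr x i j t))
    (x y : Fin n → ℝ) (hx : ∀ k, 0 ≤ x k) (hy : ∀ k, 0 ≤ y k) (h : Majorizes n x y) :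
    F x ≤ F y := by
  obtain ⟨σ, hσ⟩ := exists_sort x
  obtain ⟨τ, hτ⟩ := exists_sort y
  rw [← hsym x σ, ← hsym y τ]
  refine schur_chain F hF (y ∘ τ) (fun k => hy _) hτ _ (x ∘ σ) le_rfl (fun k => hx _) ?_ ?_
  · have h1 : ∑ k, (x ∘ σ) k = ∑ k, x k := Equiv.sum_comp σ x
    have h2 : ∑ k, (y ∘ τ) k = ∑ k, y k := Equiv.sum_comp τ y
    rw [h1, h2, h.1]
  · intro j
    rcases Nat.eq_zero_or_pos (j : ℕ) with h0 | h0
    · have : Finset.Iio j = ∅ := by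
        ext k; simp only [Finset.mem_Iio, Finset.notMem_empty, Fin.lt_def, iff_false]; omega
      simp [this]
    · have hm := h.2 j h0 (by omega)
      rw [← sMax_perm y τ, ← sMax_perm x σ] at hm
      have h1 := le_sMax (y ∘ τ) (Finset.Iio j)
      rw [Fin.card_Iio] at h1
      obtain ⟨A, hA, hA2⟩ := exists_sMax j.2.le (x ∘ σ)
      have h2 := prefix_max (x ∘ σ) hσ j A hA
      linarith

lemma M_perm {n k r : ℕ} (x : Fin n → ℝ) (σ : Equiv.Perm (Fin n)) :
    M n k r (x ∘ σ) = M n k r x := by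
  unfold M
  refine Finset.sum_equiv σ.finsetCongr ?_ ?_
  · intro A; simp [Finset.mem_powersetCard]
  · intro A _; simp

lemma M_tr {n k r : ℕ} (x : Fin n → ℝ) (i j : Fin n) (t : ℝ) (hx : ∀ k, 0 ≤ x k) (hij : i ≠ j)
    (ht : 0 ≤ t) (h : x j + t ≤ x i - t) : M n k r (tr x i j t) ≤ M n k r x := by
  by_cases hD : x i = x j
  · have : t = 0 := by linarith
    subst this
    have : tr x i j 0 = x := by ext l; simp [tr_eq x i j hij]
    rw [this]
  have hD' : 0 < x i - x j := lt_of_le_of_ne (by linarith) (fun h => hD (by linarith))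
  set l := t / (x i - x j) with hl
  have hl0 : 0 ≤ l := by positivity
  have hl1 : 0 ≤ 1 - l := by
    rw [hl, sub_nonneg, div_le_one hD']; linarith
  have hlt : l * (x i - x j) = t := by rw [hl]; field_simp
  have htr : ∀ m, tr x i j t m = (1 - l) * x m + l * (x ∘ Equiv.swap i j) m := by
    intro m
    simp only [Function.comp, tr]
    split_ifs with h1 h2
    · subst h1; rw [Equiv.swap_apply_left]; linarith
    · subst h2; rw [Equiv.swap_apply_right]; linarith
    · rw [Equiv.swap_apply_of_ne_of_ne h1 h2]; ring
  have key : M n k r (tr x i j t) ≤ (1 - l) * M n k r x + l * M n k r (x ∘ Equiv.swap i j) := by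
    unfold M
    rw [Finset.mul_sum, Finset.mul_sum, ← Finset.sum_add_distrib]
    apply Finset.sum_le_sum
    intro A _
    simp only [htr]
    rw [Finset.sum_add_distrib, ← Finset.mul_sum, ← Finset.mul_sum]
    have := (convexOn_pow (𝕜 := ℝ) k).2 (x := ∑ i ∈ A, x i) (y := ∑ m ∈ A, (x ∘ Equiv.swap i j) m)
      (Finset.sum_nonneg fun m _ => hx m) (Finset.sum_nonneg fun m _ => hx _) hl1 hl0 (by ring)
    simpa using this
  rw [M_perm] at key
  linarith

lemma G_perm {n k r : ℕ} (x : Fin n → ℝ) (σ : Equiv.Perm (Fin n)) :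
    G n k r (x ∘ σ) = G n k r x := by
  unfold G
  refine Finset.sum_equiv (Equiv.arrowCongr σ (Equiv.refl _)) ?_ ?_
  · intro p
    simp only [Finset.mem_filter, Finset.mem_univ, true_and, Equiv.arrowCongr_apply, Equiv.coe_refl,
      Function.comp, id]
    rw [Equiv.sum_comp σ.symm (fun i => (p i : ℕ))]
    have : (Finset.univ.filter fun i => (p (σ.symm i) : ℕ) ≠ 0) =
        (Finset.univ.filter fun i => (p i : ℕ) ≠ 0).map σ.toEmbedding := by
      ext i
      simp
    rw [this, Finset.card_map]
  · intro p _
    simp only [Equiv.arrowCongr_apply, Equiv.coe_refl, Function.comp, id]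
    rw [← Equiv.prod_comp σ (fun i => x i ^ (p (σ.symm i) : ℕ) / (Nat.factorial (p (σ.symm i) : ℕ) : ℝ))]
    simp

/-- number of nonzero entries -/
def nz {n : ℕ} (p : Fin n → ℕ) : ℕ := (Finset.univ.filter fun i => p i ≠ 0).card

/-- the term -/
noncomputable def T {n : ℕ} (x : Fin n → ℝ) (p : Fin n → ℕ) : ℝ :=
  ∏ i, x i ^ p i / (Nat.factorial (p i))

lemma T_nonneg {n : ℕ} (x : Fin n → ℝ) (hx : ∀ i, 0 ≤ x i) (p : Fin n → ℕ) : 0 ≤ T x p :=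
  Finset.prod_nonneg fun i _ => div_nonneg (pow_nonneg (hx i) _) (by positivity)

lemma G_eq {n k r : ℕ} (x : Fin n → ℝ) :
    G n k r x = ∑ p ∈ (Finset.piAntidiag Finset.univ k).filter (fun p => r ≤ nz p), T x p := by
  unfold G
  refine Finset.sum_bij (fun κ _ i => (κ i : ℕ)) ?_ ?_ ?_ ?_
  · intro κ h
    simp only [Finset.mem_filter, Finset.mem_univ, true_and] at h
    simp only [Finset.mem_filter, Finset.mem_piAntidiag]
    exact ⟨⟨h.1, by simp⟩, h.2⟩
  · intro a _ b _ h
    ext i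
    exact congrFun h i
  · intro p hp
    simp only [Finset.mem_filter, Finset.mem_piAntidiag] at hp
    have hlt : ∀ i, p i < k + 1 := fun i => by
      have := Finset.single_le_sum (f := p) (fun _ _ => Nat.zero_le _) (Finset.mem_univ i)
      have h2 : ∑ i, p i = k := hp.1.1
      omega
    refine ⟨fun i => ⟨p i, hlt i⟩, ?_, rfl⟩
    simp only [Finset.mem_filter, Finset.mem_univ, true_and]
    exact ⟨hp.1.1, hp.2⟩
  · intro κ _
    rfl

lemma sum_T {n k : ℕ} (x : Fin n → ℝ) (A : Finset (Fin n)) :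
    ∑ p ∈ Finset.piAntidiag A k, T x p = (∑ i ∈ A, x i) ^ k / (Nat.factorial k) := by
  rw [Finset.sum_pow_eq_sum_piAntidiag, Finset.sum_div]
  apply Finset.sum_congr rfl
  intro p hp
  rw [Finset.mem_piAntidiag] at hp
  have h1 : T x p = ∏ i ∈ A, x i ^ p i / (Nat.factorial (p i)) := by
    symm
    apply Finset.prod_subset (Finset.subset_univ _)
    intro i _ hi
    have : p i = 0 := by
      by_contra h; exact hi (hp.2 i h)
    simp [this]
  have h2 := Nat.multinomial_spec A p
  rw [hp.1] at h2
  have h3 : (∏ i ∈ A, ((Nat.factorial (p i) : ℕ) : ℝ)) * (Nat.multinomial A p : ℝ) = (Nat.factorial k : ℝ) := by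
    exact_mod_cast h2
  have h4 : (∏ i ∈ A, ((Nat.factorial (p i) : ℕ) : ℝ)) ≠ 0 :=
    Finset.prod_ne_zero_iff.2 fun i _ => by positivity
  have h5 : (Nat.multinomial A p : ℝ) ≠ 0 := by
    have := Nat.multinomial_pos A p
    positivity
  rw [h1, Finset.prod_div_distrib, ← h3]
  field_simp

lemma G_compl {n k r : ℕ} (x : Fin n → ℝ) :
    (∑ i, x i) ^ k / (Nat.factorial k) = G n k r x +
      ∑ p ∈ (Finset.piAntidiag Finset.univ k).filter (fun p => ¬ r ≤ nz p), T x p := by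
  rw [← sum_T, G_eq, Finset.sum_filter_add_sum_filter_not]

lemma L_lower {n k : ℕ} (x : Fin n → ℝ) (hx : ∀ i, 0 ≤ x i) (A : Finset (Fin n)) :
    (∑ i ∈ A, x i) ^ k / (Nat.factorial k) ≤
      ∑ p ∈ (Finset.piAntidiag Finset.univ k).filter (fun p => ¬ A.card + 1 ≤ nz p), T x p := by
  rw [← sum_T]
  apply Finset.sum_le_sum_of_subset_of_nonneg
  · intro p hp
    rw [Finset.mem_piAntidiag] at hp
    rw [Finset.mem_filter, Finset.mem_piAntidiag]
    refine ⟨⟨?_, by simp⟩, ?_⟩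
    · rw [← hp.1]
      symm
      apply Finset.sum_subset (Finset.subset_univ _)
      intro i _ hi
      by_contra h; exact hi (hp.2 i h)
    · have : nz p ≤ A.card := Finset.card_le_card fun i hi => hp.2 i (by simpa using hi)
      omega
  · intro p _ _
    exact T_nonneg x hx p

lemma sum_biUnion_le' {α β : Type*} [DecidableEq α] [DecidableEq β] (s : Finset α) (f : α → Finset β)
    (g : β → ℝ) (hg : ∀ b, 0 ≤ g b) : ∑ b ∈ s.biUnion f, g b ≤ ∑ a ∈ s, ∑ b ∈ f a, g b := by
  induction s using Finset.induction_on with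
  | empty => simp
  | insert a s ha ih =>
    rw [Finset.biUnion_insert, Finset.sum_insert ha]
    have h1 := Finset.sum_union_inter (s₁ := f a) (s₂ := s.biUnion f) (f := g)
    have h2 : 0 ≤ ∑ b ∈ f a ∩ s.biUnion f, g b := Finset.sum_nonneg fun b _ => hg b
    linarith

lemma L_upper {n k r : ℕ} (hr : r ≤ n) (x : Fin n → ℝ) (hx : ∀ i, 0 ≤ x i) :
    ∑ p ∈ (Finset.piAntidiag Finset.univ k).filter (fun p => ¬ r + 1 ≤ nz p), T x p ≤
      M n k r x / (Nat.factorial k) := by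
  unfold M
  rw [Finset.sum_div]
  simp only [← sum_T]
  calc _ ≤ ∑ p ∈ (Finset.powersetCard r (Finset.univ : Finset (Fin n))).biUnion
        (fun A => Finset.piAntidiag A k), T x p := by
        apply Finset.sum_le_sum_of_subset_of_nonneg
        · intro p hp
          rw [Finset.mem_filter, Finset.mem_piAntidiag] at hp
          rw [Finset.mem_biUnion]
          obtain ⟨A, hA1, -, hA2⟩ := Finset.exists_subsuperset_card_eq
            (s := Finset.univ.filter fun i => p i ≠ 0) (t := Finset.univ) (n := r)
            (Finset.subset_univ _) (by have := hp.2; unfold nz at this; omega) (by simpa using hr)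
          refine ⟨A, by simp [Finset.mem_powersetCard, hA2], ?_⟩
          have hz : ∀ i, p i ≠ 0 → i ∈ A := fun i hi => hA1 (by simpa using hi)
          rw [Finset.mem_piAntidiag]
          refine ⟨?_, hz⟩
          rw [← hp.1.1]
          apply Finset.sum_subset (Finset.subset_univ _)
          intro i _ hi
          by_contra h; exact hi (hz i h)
        · intro p _ _
          exact T_nonneg x hx p
    _ ≤ _ := by
        exact sum_biUnion_le' _ _ _ (fun p => T_nonneg x hx p)

lemma M_le {n k r : ℕ} (x : Fin n → ℝ) (hx : ∀ i, 0 ≤ x i) :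
    M n k r x ≤ (n.choose r : ℝ) * sMax n r x ^ k := by
  unfold M
  have : (n.choose r : ℝ) * sMax n r x ^ k =
      ∑ A ∈ Finset.powersetCard r (Finset.univ : Finset (Fin n)), sMax n r x ^ k := by simp
  rw [this]
  apply Finset.sum_le_sum
  intro A hA
  rw [Finset.mem_powersetCard] at hA
  have := le_sMax x A
  rw [hA.2] at this
  exact pow_le_pow_left₀ (Finset.sum_nonneg fun i _ => hx i) this _

lemma le_M {n k : ℕ} (x : Fin n → ℝ) (hx : ∀ i, 0 ≤ x i) (A : Finset (Fin n)) :
    (∑ i ∈ A, x i) ^ k ≤ M n k A.card x := by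
  unfold M
  exact Finset.single_le_sum (f := fun A : Finset (Fin n) => (∑ i ∈ A, x i) ^ k)
    (fun B _ => pow_nonneg (Finset.sum_nonneg fun i _ => hx i) _) (by simp [Finset.mem_powersetCard])

lemma pow_compare (a b C : ℝ) (hb : 0 ≤ b)
    (h : ∀ k : ℕ, 1 ≤ k → a ^ k ≤ C * b ^ k) : a ≤ b := by
  by_contra hab
  push Not at hab
  rcases hb.eq_or_lt with h0 | h0
  · have := h 1 le_rfl
    rw [← h0] at this hab
    simp at this
    linarith
  · have h1 : 1 < a / b := (one_lt_div h0).2 hab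
    obtain ⟨k, hk⟩ := pow_unbounded_of_one_lt C h1
    have h2 : (a / b) ^ k ≤ (a / b) ^ (k + 1) := pow_le_pow_right₀ h1.le (by omega)
    have h3 := h (k + 1) (by omega)
    have h4 : C < (a / b) ^ (k + 1) := by linarith
    rw [div_pow, lt_div_iff₀ (by positivity)] at h4
    linarith

lemma sMax_nonneg {n m : ℕ} (hm : m ≤ n) (x : Fin n → ℝ) (hx : ∀ i, 0 ≤ x i) : 0 ≤ sMax n m x := by
  obtain ⟨A, _, h⟩ := exists_sMax hm x
  rw [h]
  exact Finset.sum_nonneg fun i _ => hx i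


lemma two_sum (u v : ℝ) (m : ℕ) :
    ∑ q ∈ Finset.HasAntidiagonal.antidiagonal m, (u ^ q.1 / (Nat.factorial q.1)) * (v ^ q.2 / (Nat.factorial q.2)) =
      (u + v) ^ m / (Nat.factorial m) := by
  rw [(Commute.all u v).add_pow', Finset.sum_div]
  apply Finset.sum_congr rfl
  intro q hq
  rw [Finset.HasAntidiagonal.mem_antidiagonal] at hq
  subst hq
  rw [nsmul_eq_mul, Nat.choose_symm_add, Nat.add_choose, Nat.cast_div (Nat.factorial_mul_factorial_dvd_factorial_add _ _) (by positivity)]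
  push_cast
  field_simp

/-- indicator -/
def ind (a : ℕ) : ℕ := if a ≠ 0 then 1 else 0

lemma pow_tr (u v t : ℝ) (hv : 0 ≤ v) (ht : 0 ≤ t) (h : v + t ≤ u - t) (m : ℕ) :
    (u - t) ^ m + (v + t) ^ m ≤ u ^ m + v ^ m := by
  by_cases hD : u = v
  · have : t = 0 := by linarith
    subst this; simp
  have hD' : 0 < u - v := lt_of_le_of_ne (by linarith) (fun h => hD (by linarith))
  set l := t / (u - v) with hl
  have hl0 : 0 ≤ l := by positivity
  have hl1 : 0 ≤ 1 - l := by
    rw [hl, sub_nonneg, div_le_one hD']; linarith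
  have hlt : l * (u - v) = t := by rw [hl]; field_simp
  have hu : 0 ≤ u := by linarith
  have h1 := (convexOn_pow (𝕜 := ℝ) m).2 (x := u) (y := v) hu hv hl1 hl0 (by ring)
  have h2 := (convexOn_pow (𝕜 := ℝ) m).2 (x := v) (y := u) hv hu hl1 hl0 (by ring)
  simp only [smul_eq_mul] at h1 h2
  have e1 : (1 - l) * u + l * v = u - t := by linarith
  have e2 : (1 - l) * v + l * u = v + t := by linarith
  rw [e1] at h1; rw [e2] at h2
  linarith

lemma ends_sum (u v : ℝ) (m : ℕ) (hm : m ≠ 0) :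
    ∑ q ∈ (Finset.HasAntidiagonal.antidiagonal m).filter (fun q => ¬ 2 ≤ ind q.1 + ind q.2),
      (u ^ q.1 / (Nat.factorial q.1)) * (v ^ q.2 / (Nat.factorial q.2)) =
      (u ^ m + v ^ m) / (Nat.factorial m) := by
  have : (Finset.HasAntidiagonal.antidiagonal m).filter (fun q => ¬ 2 ≤ ind q.1 + ind q.2) = {(m, 0), (0, m)} := by
    ext ⟨a, b⟩
    simp only [Finset.mem_filter, Finset.HasAntidiagonal.mem_antidiagonal, Finset.mem_insert,
      Finset.mem_singleton, Prod.mk.injEq]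
    unfold ind
    split_ifs <;> omega
  rw [this, Finset.sum_pair (by simp [hm])]
  simp [add_div]

lemma two_var (u v t : ℝ) (hv : 0 ≤ v) (ht : 0 ≤ t) (h : v + t ≤ u - t) (m s c : ℕ) :
    ∑ q ∈ (Finset.HasAntidiagonal.antidiagonal m).filter (fun q => s ≤ c + (ind q.1 + ind q.2)),
      (u ^ q.1 / (Nat.factorial q.1)) * (v ^ q.2 / (Nat.factorial q.2)) ≤
    ∑ q ∈ (Finset.HasAntidiagonal.antidiagonal m).filter (fun q => s ≤ c + (ind q.1 + ind q.2)),
      ((u - t) ^ q.1 / (Nat.factorial q.1)) * ((v + t) ^ q.2 / (Nat.factorial q.2)) := by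
  by_cases hm : m = 0
  · subst hm
    apply le_of_eq
    apply Finset.sum_congr rfl
    intro q hq
    rw [Finset.mem_filter, Finset.HasAntidiagonal.mem_antidiagonal] at hq
    have q1 : q.1 = 0 := by omega
    have q2 : q.2 = 0 := by omega
    rw [q1, q2]; simp
  by_cases h1 : s ≤ c + 1
  · have : (Finset.HasAntidiagonal.antidiagonal m).filter (fun q => s ≤ c + (ind q.1 + ind q.2)) =
        Finset.HasAntidiagonal.antidiagonal m := by
      rw [Finset.filter_eq_self]
      intro q hq
      rw [Finset.HasAntidiagonal.mem_antidiagonal] at hq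
      unfold ind
      split_ifs <;> omega
    rw [this, two_sum, two_sum]
    apply le_of_eq; congr 2; ring
  by_cases h2 : s = c + 2
  · have : (Finset.HasAntidiagonal.antidiagonal m).filter (fun q => s ≤ c + (ind q.1 + ind q.2)) =
        (Finset.HasAntidiagonal.antidiagonal m).filter (fun q => 2 ≤ ind q.1 + ind q.2) := by
      apply Finset.filter_congr
      intro q _
      omega
    rw [this]
    have a1 := Finset.sum_filter_add_sum_filter_not (Finset.HasAntidiagonal.antidiagonal m)
      (fun q => 2 ≤ ind q.1 + ind q.2)
      (fun q => (u ^ q.1 / (Nat.factorial q.1)) * (v ^ q.2 / (Nat.factorial q.2)))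
    have a2 := Finset.sum_filter_add_sum_filter_not (Finset.HasAntidiagonal.antidiagonal m)
      (fun q => 2 ≤ ind q.1 + ind q.2)
      (fun q => ((u - t) ^ q.1 / (Nat.factorial q.1)) * ((v + t) ^ q.2 / (Nat.factorial q.2)))
    rw [ends_sum _ _ _ hm, two_sum] at a1 a2
    have e : u - t + (v + t) = u + v := by ring
    rw [e] at a2
    have h3 : ((u - t) ^ m + (v + t) ^ m) / (Nat.factorial m : ℝ) ≤ (u ^ m + v ^ m) / (Nat.factorial m) := by
      have := pow_tr u v t hv ht h m
      gcongr
    linarith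
  · have : (Finset.HasAntidiagonal.antidiagonal m).filter (fun q => s ≤ c + (ind q.1 + ind q.2)) = ∅ := by
      rw [Finset.filter_eq_empty_iff]
      intro q _
      unfold ind
      split_ifs <;> omega
    rw [this]; simp

/-- pair replacement -/
def rep {n : ℕ} (i j : Fin n) (q : Fin n → ℕ) (a b : ℕ) : Fin n → ℕ :=
  fun l => if l = i then a else if l = j then b else q l

lemma split_prod {n : ℕ} {R : Type*} [CommMonoid R] (i j : Fin n) (hij : i ≠ j) (f : Fin n → R) :
    ∏ l, f l = (∏ l ∈ (Finset.univ.erase i).erase j, f l) * (f i * f j) := by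
  rw [← Finset.mul_prod_erase Finset.univ f (Finset.mem_univ i),
    ← Finset.mul_prod_erase (Finset.univ.erase i) f (a := j) (by simp [hij.symm])]
  rw [← mul_assoc, mul_comm]

lemma split_sum {n : ℕ} (i j : Fin n) (hij : i ≠ j) (f : Fin n → ℕ) :
    ∑ l, f l = (∑ l ∈ (Finset.univ.erase i).erase j, f l) + (f i + f j) := by
  rw [← Finset.add_sum_erase Finset.univ f (Finset.mem_univ i),
    ← Finset.add_sum_erase (Finset.univ.erase i) f (a := j) (by simp [hij.symm])]
  omega

lemma nz_rep {n : ℕ} (i j : Fin n) (hij : i ≠ j) (q : Fin n → ℕ) (a b : ℕ) :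
    nz (rep i j q a b) = (∑ l ∈ (Finset.univ.erase i).erase j, ind (q l)) + (ind a + ind b) := by
  unfold nz
  rw [Finset.card_filter]
  change ∑ l, ind (rep i j q a b l) = _
  rw [split_sum i j hij]
  congr 1
  · apply Finset.sum_congr rfl
    intro l hl
    simp only [Finset.mem_erase, Finset.mem_univ, and_true] at hl
    simp [rep, hl.1, hl.2]
  · simp [rep, hij.symm]

lemma sum_rep {n : ℕ} (i j : Fin n) (hij : i ≠ j) (q : Fin n → ℕ) (a b : ℕ) :
    ∑ l, rep i j q a b l = (∑ l ∈ (Finset.univ.erase i).erase j, q l) + (a + b) := by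
  rw [split_sum i j hij]
  congr 1
  · apply Finset.sum_congr rfl
    intro l hl
    simp only [Finset.mem_erase, Finset.mem_univ, and_true] at hl
    simp [rep, hl.1, hl.2]
  · simp [rep, hij.symm]

lemma T_rep {n : ℕ} (i j : Fin n) (hij : i ≠ j) (x : Fin n → ℝ) (q : Fin n → ℕ) (a b : ℕ) :
    T x (rep i j q a b) = (∏ l ∈ (Finset.univ.erase i).erase j, x l ^ q l / (Nat.factorial (q l))) *
      ((x i ^ a / (Nat.factorial a)) * (x j ^ b / (Nat.factorial b))) := by
  unfold T
  rw [split_prod i j hij]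
  congr 1
  · apply Finset.prod_congr rfl
    intro l hl
    simp only [Finset.mem_erase, Finset.mem_univ, and_true] at hl
    simp [rep, hl.1, hl.2]
  · simp [rep, hij.symm]

lemma G_fiber {n k r : ℕ} (x : Fin n → ℝ) (i j : Fin n) (hij : i ≠ j) :
    G n k r x = ∑ q ∈ (Finset.piAntidiag Finset.univ k).filter (fun q => q j = 0),
      (∏ l ∈ (Finset.univ.erase i).erase j, x l ^ q l / (Nat.factorial (q l))) *
      ∑ w ∈ (Finset.HasAntidiagonal.antidiagonal (q i)).filter
        (fun w => r ≤ (∑ l ∈ (Finset.univ.erase i).erase j, ind (q l)) + (ind w.1 + ind w.2)),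
        (x i ^ w.1 / (Nat.factorial w.1)) * (x j ^ w.2 / (Nat.factorial w.2)) := by
  rw [G_eq]
  simp only [Finset.mul_sum]
  rw [Finset.sum_sigma']
  have hself : ∀ p : Fin n → ℕ, rep i j p (p i) (p j) = p := by
    intro p; ext l; unfold rep; split_ifs with h1 h2
    · rw [h1]
    · rw [h2]
    · rfl
  have hrr : ∀ (p : Fin n → ℕ) (a b c d : ℕ), rep i j (rep i j p a b) c d = rep i j p c d := by
    intro p a b c d; ext l; unfold rep; split_ifs <;> rfl
  symm
  refine Finset.sum_bij' (fun s _ => rep i j s.1 s.2.1 s.2.2)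
    (fun p _ => ⟨rep i j p (p i + p j) 0, (p i, p j)⟩) ?_ ?_ ?_ ?_ ?_
  · rintro ⟨q, a, b⟩ h
    simp only [Finset.mem_sigma, Finset.mem_filter, Finset.mem_piAntidiag, Finset.HasAntidiagonal.mem_antidiagonal] at h
    simp only [Finset.mem_filter, Finset.mem_piAntidiag]
    refine ⟨⟨?_, by simp⟩, ?_⟩
    · rw [sum_rep i j hij, h.2.1, ← h.1.1.1, split_sum i j hij q, h.1.2]; simp
    · rw [nz_rep i j hij]; exact h.2.2
  · intro p h
    simp only [Finset.mem_filter, Finset.mem_piAntidiag] at h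
    simp only [Finset.mem_sigma, Finset.mem_filter, Finset.mem_piAntidiag, Finset.HasAntidiagonal.mem_antidiagonal]
    refine ⟨⟨⟨?_, by simp⟩, ?_⟩, ?_, ?_⟩
    · rw [sum_rep i j hij, ← h.1.1, split_sum i j hij p]; simp
    · simp [rep, hij.symm]
    · simp [rep]
    · rw [← nz_rep i j hij, hrr, hself]; exact h.2
  · rintro ⟨q, a, b⟩ h
    simp only [Finset.mem_sigma, Finset.mem_filter, Finset.mem_piAntidiag, Finset.HasAntidiagonal.mem_antidiagonal] at h
    have e1 : rep i j q a b i = a := by simp [rep]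
    have e2 : rep i j q a b j = b := by simp [rep, hij.symm]
    simp only [e1, e2, hrr, h.2.1]
    have : rep i j q (q i) 0 = q := by
      have := hself q
      rw [h.1.2] at this
      exact this
    rw [this]
  · intro p _
    simp only [hrr, hself]
  · rintro ⟨q, a, b⟩ _
    simp only [T_rep i j hij]

lemma G_tr {n k r : ℕ} (x : Fin n → ℝ) (i j : Fin n) (t : ℝ) (hx : ∀ k, 0 ≤ x k) (hij : i ≠ j)
    (ht : 0 ≤ t) (h : x j + t ≤ x i - t) : G n k r x ≤ G n k r (tr x i j t) := by
  rw [G_fiber x i j hij, G_fiber (tr x i j t) i j hij]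
  apply Finset.sum_le_sum
  intro q _
  have e1 : tr x i j t i = x i - t := by simp [tr]
  have e2 : tr x i j t j = x j + t := by simp [tr, hij.symm]
  have e3 : ∏ l ∈ (Finset.univ.erase i).erase j, tr x i j t l ^ q l / (Nat.factorial (q l) : ℝ) =
      ∏ l ∈ (Finset.univ.erase i).erase j, x l ^ q l / (Nat.factorial (q l)) := by
    apply Finset.prod_congr rfl
    intro l hl
    simp only [Finset.mem_erase, Finset.mem_univ, and_true] at hl
    simp [tr, hl.1, hl.2]
  rw [e1, e2, e3]
  apply mul_le_mul_of_nonneg_left (two_var _ _ _ (hx j) ht h _ _ _)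
  exact Finset.prod_nonneg fun l _ => div_nonneg (pow_nonneg (hx l) _) (by positivity)

theorem stmt13 (n : ℕ) (hn : 1 ≤ n) (x y : Fin n → ℝ)
    (hx : ∀ i, 0 ≤ x i) (hy : ∀ i, 0 ≤ y i)
    (hsum : ∑ i, x i = ∑ i, y i) :
    (Majorizes n x y ↔ ∀ k r : ℕ, 1 ≤ k → 1 ≤ r → G n k r x ≤ G n k r y) ∧
    (Majorizes n x y ↔ ∀ k r : ℕ, 1 ≤ k → 1 ≤ r → M n k r y ≤ M n k r x) := by
  refine ⟨⟨?_, ?_⟩, ⟨?_, ?_⟩⟩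
  · intro h k r _ _
    exact schur_main (G n k r) (fun x σ => G_perm x σ)
      (fun x i j t h1 h2 h3 h4 => G_tr x i j t h1 h2 h3 h4) x y hx hy h
  · intro h
    refine ⟨hsum, fun m h1 h2 => ?_⟩
    have hmn : m ≤ n := by omega
    obtain ⟨A, hA, hA2⟩ := exists_sMax hmn y
    refine pow_compare _ _ (n.choose m) (sMax_nonneg hmn x hx) fun k hk => ?_
    have g := h k (m + 1) hk (by omega)
    have c1 := G_compl (k := k) (r := m + 1) x
    have c2 := G_compl (k := k) (r := m + 1) y
    rw [hsum] at c1
    have l1 := L_lower (k := k) y hy A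
    rw [hA, ← hA2] at l1
    have l2 := L_upper (k := k) hmn x hx
    have l3 := M_le (k := k) (r := m) x hx
    have l4 : sMax n m y ^ k / (Nat.factorial k : ℝ) ≤ M n k m x / (Nat.factorial k) := by linarith
    rw [div_le_div_iff_of_pos_right (by positivity)] at l4
    exact l4.trans l3
  · intro h k r _ _
    have := schur_main (fun x => - M n k r x) (fun x σ => by rw [M_perm x σ])
      (fun x i j t h1 h2 h3 h4 => neg_le_neg (M_tr x i j t h1 h2 h3 h4)) x y hx hy h
    simpa using this
  · intro h
    refine ⟨hsum, fun m h1 h2 => ?_⟩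
    have hmn : m ≤ n := by omega
    obtain ⟨A, hA, hA2⟩ := exists_sMax hmn y
    refine pow_compare _ _ (n.choose m) (sMax_nonneg hmn x hx) fun k hk => ?_
    have l1 := le_M (k := k) y hy A
    rw [hA, ← hA2] at l1
    exact (l1.trans (h k m hk h1)).trans (M_le x hx)
end

section
/- Let n ≥ 1, k ≥ 1, and 1 ≤ r ≤ n be integers, and let x ∈ [0,∞)^n. Then (1/k!)·M_{k,r}(x) = ∑_{j=2}^{r+1} C(n−j, r+1−j) · Ḡ_{k,j}(x), where C(a,b) denotes the binomial coefficient; explicitly, (1/k!)M_{k,r} = C(n−r−1,0)Ḡ_{k,r+1} + C(n−r,1)Ḡ_{k,r} + ⋯ + C(n−2,r−1)Ḡ_{k,2}. -/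
open Finset MeasureTheory

/-- `Ḡ n k r x = (x₁ + ⋯ + x_n)^k / k! − G n k r x`. -/
noncomputable def Gbar (n k r : ℕ) (x : Fin n → ℝ) : ℝ :=
  (∑ i, x i) ^ k / (Nat.factorial k) - G n k r x

theorem aux_pow (n k : ℕ) (y : Fin n → ℝ) :
    (∑ i, y i) ^ k / (Nat.factorial k) =
      ∑ κ ∈ Finset.univ.filter (fun κ : Fin n → Fin (k + 1) => (∑ i, (κ i : ℕ)) = k),
        ∏ i, y i ^ (κ i : ℕ) / (Nat.factorial (κ i : ℕ)) := by
  rw [Finset.sum_pow_eq_sum_piAntidiag, Finset.sum_div]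
  symm
  refine Finset.sum_bij (fun κ _ => fun i => (κ i : ℕ)) ?_ ?_ ?_ ?_
  · intro κ h
    simpa using h
  · intro a _ b _ h
    funext i
    exact Fin.ext (congrFun h i)
  · intro b hb
    have hb' : ∑ i, b i = k := by simpa using hb
    refine ⟨fun i => ⟨b i, ?_⟩, ?_, ?_⟩
    · have := Finset.single_le_sum (f := b) (fun i _ => Nat.zero_le _) (Finset.mem_univ i)
      omega
    · simpa using hb'
    · rfl
  · intro κ h
    have hs : (∑ i, (κ i : ℕ)) = k := by simpa using h
    have hm := Nat.multinomial_spec Finset.univ (fun i => (κ i : ℕ))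
    rw [hs] at hm
    have hm' : (∏ i, (Nat.factorial (κ i : ℕ) : ℝ)) *
        (Nat.multinomial Finset.univ (fun i => (κ i : ℕ)) : ℝ) = (Nat.factorial k : ℝ) := by
      exact_mod_cast hm
    have h1 : (∏ i, (Nat.factorial (κ i : ℕ) : ℝ)) ≠ 0 :=
      Finset.prod_ne_zero_iff.mpr fun i _ => by positivity
    have h2 : (Nat.factorial k : ℝ) ≠ 0 := by positivity
    rw [Finset.prod_div_distrib, div_eq_div_iff h1 h2, ← hm']
    ring

theorem aux_hockey (n r : ℕ) (hrn : r ≤ n) (d s : ℕ) (h : s + d = r) :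
    ∑ j ∈ Finset.Icc (s + 1) (r + 1), Nat.choose (n - j) (r + 1 - j)
      = Nat.choose (n - s) (r - s) := by
  induction d generalizing s with
  | zero =>
    obtain rfl : s = r := by omega
    simp
  | succ d ih =>
    rw [← Finset.add_sum_Ioc_eq_sum_Icc (by omega), ← Finset.Icc_add_one_left_eq_Ioc,
      ih (s + 1) (by omega)]
    obtain ⟨a, ha⟩ : ∃ a, n - s = a + 1 := ⟨n - s - 1, by omega⟩
    obtain ⟨b, hb⟩ : ∃ b, r - s = b + 1 := ⟨r - s - 1, by omega⟩
    rw [ha, hb, Nat.choose_succ_succ, show n - (s + 1) = a by omega,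
      show r + 1 - (s + 1) = b + 1 by omega, show r - (s + 1) = b by omega, add_comm]

theorem aux_count (n r : ℕ) (S : Finset (Fin n)) :
    ((Finset.powersetCard r (Finset.univ : Finset (Fin n))).filter (fun A => S ⊆ A)).card
      = if S.card ≤ r then Nat.choose (n - S.card) (r - S.card) else 0 := by
  split_ifs with h
  · have := Finset.card_powersetCard (r - S.card) (Finset.univ \ S)
    rw [Finset.card_sdiff_of_subset (Finset.subset_univ S), Finset.card_univ,
      Fintype.card_fin] at this
    rw [← this]
    refine Finset.card_bij' (fun A _ => A \ S) (fun B _ => B ∪ S) ?_ ?_ ?_ ?_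
    · intro A hA
      simp only [Finset.mem_filter, Finset.mem_powersetCard_univ] at hA
      rw [Finset.mem_powersetCard]
      exact ⟨Finset.sdiff_subset_sdiff (Finset.subset_univ _) le_rfl, by
        rw [Finset.card_sdiff_of_subset hA.2, hA.1]⟩
    · intro B hB
      rw [Finset.mem_powersetCard] at hB
      have hd : Disjoint B S := Finset.disjoint_of_subset_left hB.1 Finset.sdiff_disjoint
      simp only [Finset.mem_filter, Finset.mem_powersetCard_univ]
      refine ⟨?_, Finset.subset_union_right⟩
      rw [Finset.card_union_of_disjoint hd, hB.2]
      omega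
    · intro A hA
      simp only [Finset.mem_filter] at hA
      exact Finset.sdiff_union_of_subset hA.2
    · intro B hB
      rw [Finset.mem_powersetCard] at hB
      have hd : Disjoint B S := Finset.disjoint_of_subset_left hB.1 Finset.sdiff_disjoint
      exact Finset.union_sdiff_cancel_right hd
  · rw [Finset.card_eq_zero, Finset.filter_eq_empty_iff]
    intro A hA hS
    rw [Finset.mem_powersetCard_univ] at hA
    have := Finset.card_le_card hS
    omega

theorem aux_pow_sub (n k : ℕ) (x : Fin n → ℝ) (A : Finset (Fin n)) :
    (∑ i ∈ A, x i) ^ k / (Nat.factorial k) =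
      ∑ κ ∈ Finset.univ.filter (fun κ : Fin n → Fin (k + 1) => (∑ i, (κ i : ℕ)) = k),
        if (Finset.univ.filter fun i => (κ i : ℕ) ≠ 0) ⊆ A then
          ∏ i, x i ^ (κ i : ℕ) / (Nat.factorial (κ i : ℕ)) else 0 := by
  have h := aux_pow n k (fun i => if i ∈ A then x i else 0)
  rw [Finset.sum_ite_mem, Finset.univ_inter] at h
  rw [h]
  refine Finset.sum_congr rfl fun κ _ => ?_
  split_ifs with hS
  · refine Finset.prod_congr rfl fun i _ => ?_
    by_cases hi : i ∈ A
    · simp [hi]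
    · have : (κ i : ℕ) = 0 := by
        by_contra h0
        exact hi (hS (by simpa using h0))
      rw [this]; simp
  · rw [Finset.not_subset] at hS
    obtain ⟨i, hi, hiA⟩ := hS
    refine Finset.prod_eq_zero (Finset.mem_univ i) ?_
    have h0 : (κ i : ℕ) ≠ 0 := (Finset.mem_filter.mp hi).2
    simp only [hiA, if_false]
    rw [zero_pow h0, zero_div]

theorem aux_Gbar (n k j : ℕ) (x : Fin n → ℝ) :
    Gbar n k j x =
      ∑ κ ∈ Finset.univ.filter (fun κ : Fin n → Fin (k + 1) => (∑ i, (κ i : ℕ)) = k),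
        if j ≤ (Finset.univ.filter fun i => (κ i : ℕ) ≠ 0).card then 0 else
          ∏ i, x i ^ (κ i : ℕ) / (Nat.factorial (κ i : ℕ)) := by
  unfold Gbar G
  rw [aux_pow, ← Finset.filter_filter, Finset.sum_filter
    (fun κ : Fin n → Fin (k + 1) => j ≤ (Finset.univ.filter fun i => (κ i : ℕ) ≠ 0).card),
    ← Finset.sum_sub_distrib]
  refine Finset.sum_congr rfl fun κ _ => ?_
  split_ifs <;> simp

theorem stmt18 (n k r : ℕ) (hn : 1 ≤ n) (hk : 1 ≤ k) (hr : 1 ≤ r) (hrn : r ≤ n)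
    (x : Fin n → ℝ) (hx : ∀ i, 0 ≤ x i) :
    M n k r x / (Nat.factorial k)
      = ∑ j ∈ Finset.Icc 2 (r + 1),
          (Nat.choose (n - j) (r + 1 - j) : ℝ) * Gbar n k j x := by
  simp_rw [aux_Gbar, Finset.mul_sum]
  unfold M
  rw [Finset.sum_div, Finset.sum_comm]
  simp_rw [aux_pow_sub]
  rw [Finset.sum_comm]
  refine Finset.sum_congr rfl fun κ hκ => ?_
  have hs : (∑ i, (κ i : ℕ)) = k := by simpa using hκ
  have hpos : 1 ≤ (Finset.univ.filter fun i => (κ i : ℕ) ≠ 0).card := by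
    rw [Nat.one_le_iff_ne_zero, Finset.card_ne_zero]
    by_contra h
    rw [Finset.not_nonempty_iff_eq_empty, Finset.filter_eq_empty_iff] at h
    have : (∑ i, (κ i : ℕ)) = 0 := Finset.sum_eq_zero fun i hi => by
      simpa using h hi
    omega
  have hc := aux_count n r (Finset.univ.filter fun i => (κ i : ℕ) ≠ 0)
  rw [← Finset.sum_filter, Finset.sum_const, hc, nsmul_eq_mul]
  generalize (∏ i, x i ^ (κ i : ℕ) / (Nat.factorial (κ i : ℕ)) : ℝ) = P
  generalize (Finset.univ.filter fun i => (κ i : ℕ) ≠ 0).card = s at *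
  have e : ∀ j : ℕ, ((n - j).choose (r + 1 - j) : ℝ) * (if j ≤ s then 0 else P)
      = if s < j then ((n - j).choose (r + 1 - j) : ℝ) * P else 0 := by
    intro j
    by_cases hj : j ≤ s
    · simp [hj, not_lt.mpr hj]
    · simp [hj, not_le.mp hj]
  simp_rw [e]
  rw [← Finset.sum_filter, ← Finset.sum_mul]
  have hI : (Finset.Icc 2 (r + 1)).filter (fun j => s < j) = Finset.Icc (s + 1) (r + 1) := by
    ext j
    simp only [Finset.mem_filter, Finset.mem_Icc]
    omega
  rw [hI]
  congr 1
  split_ifs with h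
  · rw [← aux_hockey n r hrn (r - s) s (by omega)]
    push_cast
    rfl
  · rw [Finset.Icc_eq_empty (by omega)]
    simp
end
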